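/- If G ∈ F₄(F₂, P₄), then |V(G)| ≤ 8, where P₄ is the path on 4 vertices. -/

import Mathlib

/-! In a symmetric matrix of `G` over `F₂`, the block of an induced `P₄` has rank at least `3` and
is determined by its diagonal `d`. If the whole matrix has rank `3`, then the block is singular
and, together with its rows and columns, determines all other entries. So `mr(F₂, G) ≤ 3` exactly
when some `d` with singular block has two properties: the row of each vertex off the path is
orthogonal to the kernel vector of the block, and the generalized Schur complement of the block
vanishes off the diagonal. They constrain only single vertices off the path and pairs of them.

There are only five singular blocks. On vertices orthogonal to the relevant kernel vectors their
Schur complements coincide or differ by a rank-one matrix `e x * e y`. So an entry violating only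
one of two conditions has `e x = e y = 1`, and new violating pairs arise by recombining the
vertices of old ones; in this way four vertices obstruct all five diagonals at once. Together with
the path they span a subgraph of order at most `8` and minimum rank at least `4`. Deleting a
vertex outside it would not bring the minimum rank down to `3`, so there is none. -/

open Matrix

/-- `A` is a symmetric matrix over `F` whose off-diagonal nonzero pattern is
given by the graph `G` (diagonal entries are unconstrained). -/
def IsGraphMatrix (F : Type*) [Field F] {V : Type*} (G : SimpleGraph V)
    (A : Matrix V V F) : Prop :=
  A.IsSymm ∧ ∀ i j : V, i ≠ j → (A i j ≠ 0 ↔ G.Adj i j)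

/-- The minimum rank `mr(F, G)` of the graph `G` over the field `F`. -/
noncomputable def minRank (F : Type*) [Field F] {V : Type*} [Fintype V]
    (G : SimpleGraph V) : ℕ :=
  sInf {r : ℕ | ∃ A : Matrix V V F, IsGraphMatrix F G A ∧ A.rank = r}

/-- The graph `G - v` obtained from `G` by deleting the vertex `v`. -/
def deleteVert {V : Type*} (G : SimpleGraph V) (v : V) : SimpleGraph {u : V // u ≠ v} :=
  SimpleGraph.comap Subtype.val G

/-- `G ∈ F_K(F, H)`: `G` contains `H` as an induced subgraph, `mr(F, G) ≥ K`, and for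
some induced copy of `H` in `G` (an embedding `f : H ↪g G`), `mr(F, G - v) ≤ K - 1`
for every vertex `v` of `G` outside that copy. -/
def MemForbRel (F : Type*) [Field F] (K : ℕ) {VH VG : Type*} [Fintype VH] [Fintype VG]
    [DecidableEq VG] (H : SimpleGraph VH) (G : SimpleGraph VG) : Prop :=
  K ≤ minRank F G ∧
    ∃ f : H ↪g G, ∀ v : VG, v ∉ Set.range f → minRank F (deleteVert G v) + 1 ≤ K

/-- The path `P₄` on vertices `0, 1, 2, 3` with edges `01, 12, 23`. -/
def pathP4 : SimpleGraph (Fin 4) := SimpleGraph.fromEdgeSet {s(0,1), s(1,2), s(2,3)}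

section Rank

variable {K : Type*} [Field K] {m n ι κ : Type*} [Finite m] [Fintype n] [Fintype κ]
  {A : Matrix m n K} {f : ι → m} {g : κ → n}

lemma exists_mul_submatrix_eq_of_rank_le [Fintype ι]
    (h : A.rank ≤ (A.submatrix f g).rank) : ∃ C : Matrix m ι K, C * A.submatrix f id = A := by
  have := Fintype.ofFinite m
  have hspan : LinearMap.range (A.submatrix f id).vecMulLinear =
      LinearMap.range A.vecMulLinear := by
    rw [range_vecMulLinear, range_vecMulLinear]
    refine Submodule.eq_of_le_of_finrank_le (Submodule.span_mono ?_) ?_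
    · rintro _ ⟨i, rfl⟩
      exact ⟨f i, rfl⟩
    · rw [← rank_eq_finrank_span_row, ← rank_eq_finrank_span_row]
      exact h.trans (rank_submatrix_le (A.submatrix f id) id g)
  have hrow (x : m) : A.row x ∈ LinearMap.range (A.submatrix f id).vecMulLinear := by
    rw [hspan, range_vecMulLinear]
    exact Submodule.subset_span ⟨x, rfl⟩
  choose C hC using hrow
  exact ⟨of C, funext hC⟩

lemma exists_submatrix_mul_eq_of_rank_le [Finite ι]
    (h : A.rank ≤ (A.submatrix f g).rank) :
    ∃ D : Matrix κ n K, A.submatrix id g * D = A := by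
  have := Fintype.ofFinite m
  have := Fintype.ofFinite ι
  obtain ⟨C, hC⟩ := exists_mul_submatrix_eq_of_rank_le (A := Aᵀ) (f := g) (g := f) (by
    rwa [← transpose_submatrix, rank_transpose, rank_transpose])
  exact ⟨Cᵀ, transpose_injective (by simpa using hC)⟩

theorem submatrix_mul_mul_submatrix_eq_of_rank_le [Fintype ι]
    (h : A.rank ≤ (A.submatrix f g).rank)
    {N : Matrix κ ι K} (hN : A.submatrix f g * N * A.submatrix f g = A.submatrix f g) :
    A.submatrix id g * N * A.submatrix f id = A := by
  obtain ⟨C, hC⟩ := exists_mul_submatrix_eq_of_rank_le h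
  obtain ⟨D, hD⟩ := exists_submatrix_mul_eq_of_rank_le h
  have hcol : A.submatrix id g = C * A.submatrix f g := by
    conv_lhs => rw [← hC]
    rfl
  have hrow : A.submatrix f id = A.submatrix f g * D := by
    conv_lhs => rw [← hD]
    rfl
  calc A.submatrix id g * N * A.submatrix f id
      = C * (A.submatrix f g * N * A.submatrix f g) * D := by
        rw [hcol, hrow]
        simp only [Matrix.mul_assoc]
    _ = A := by rw [hN, Matrix.mul_assoc, ← hrow, hC]

end Rank

section PathMatrix

variable {R : Type*} [CommRing R] (d : Fin 4 → R)

/-- The symmetric matrices of the path `P₄` whose edge entries are `1`, parametrized by their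
diagonal `d`. -/
def pathMatrix : Matrix (Fin 4) (Fin 4) R :=
  !![d 0, 1, 0, 0; 1, d 1, 1, 0; 0, 1, d 2, 1; 0, 0, 1, d 3]

/-- The solution `k` of the first three equations of `pathMatrix d *ᵥ k = 0` with `k 0 = 1`;
it spans the kernel of `pathMatrix d` when the determinant vanishes. -/
def pathKer : Fin 4 → R :=
  ![1, -d 0, d 0 * d 1 - 1, d 0 + d 2 - d 0 * d 1 * d 2]

/-- A generalized inverse of `pathMatrix d` when the determinant vanishes: the unitriangular
submatrix of `pathMatrix d` on rows `0, 1, 2` and columns `1, 2, 3` is inverted, and the remaining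
row and column are zero. -/
def pathInv : Matrix (Fin 4) (Fin 4) R :=
  !![0, 0, 0, 0; 1, 0, 0, 0; -d 1, 1, 0, 0; d 1 * d 2 - 1, -d 2, 1, 0]

lemma isSymm_pathMatrix : (pathMatrix d).IsSymm := by
  ext i j
  fin_cases i <;> fin_cases j <;> rfl

lemma det_pathMatrix :
    (pathMatrix d).det = d 0 * d 1 * d 2 * d 3 - d 0 * d 1 - d 0 * d 3 - d 2 * d 3 + 1 := by
  simp [pathMatrix, det_succ_row_zero, Fin.sum_univ_succ, Fin.succAbove]
  ring

lemma pathMatrix_mulVec_pathKer :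
    pathMatrix d *ᵥ pathKer d = Pi.single 3 (-(pathMatrix d).det) := by
  rw [det_pathMatrix]
  ext i
  fin_cases i <;> simp [pathMatrix, pathKer, mulVec, dotProduct, Fin.sum_univ_four] <;> ring

lemma pathInv_mul_pathMatrix :
    pathInv d * pathMatrix d = 1 - vecMulVec (pathKer d) (Pi.single 0 1) := by
  ext i j
  rw [Matrix.sub_apply, vecMulVec_apply, Matrix.mul_apply, Fin.sum_univ_four]
  fin_cases i <;> fin_cases j <;> simp [pathMatrix, pathInv, pathKer] <;> ring

lemma rank_pathInv_le [StrongRankCondition R] : (pathInv d).rank ≤ 3 := by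
  classical
  refine rank_le_card_of_support_subset _ {1, 2, 3} fun i hi => ?_
  fin_cases i
  · exact absurd (by ext j; fin_cases j <;> rfl) hi
  all_goals simp

lemma three_le_rank_pathMatrix {K : Type*} [Field K] (d : Fin 4 → K) :
    3 ≤ (pathMatrix d).rank := by
  let L := (pathMatrix d).submatrix (Fin.castSucc : Fin 3 → Fin 4) Fin.succ
  have hL : L.det = 1 := by simp [L, pathMatrix, det_fin_three]
  calc 3 = L.rank := by rw [rank_of_isUnit L ((isUnit_iff_isUnit_det L).2 (by simp [hL]))]; rfl
    _ ≤ (pathMatrix d).rank := rank_submatrix_le _ _ _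

variable {d}

lemma mul_pathInv_mul_pathMatrix {m : Type*} {B : Matrix m (Fin 4) R} (hB : B *ᵥ pathKer d = 0) :
    B * pathInv d * pathMatrix d = B := by
  rw [Matrix.mul_assoc, pathInv_mul_pathMatrix, Matrix.mul_sub, Matrix.mul_one, mul_vecMulVec, hB,
    zero_vecMulVec, sub_zero]

lemma isSymm_mul_pathInv_mul_transpose {m : Type*} {B : Matrix m (Fin 4) R}
    (hB : B *ᵥ pathKer d = 0) : (B * pathInv d * Bᵀ).IsSymm := by
  have hBN := mul_pathInv_mul_pathMatrix hB
  have hBNT : pathMatrix d * (pathInv d)ᵀ * Bᵀ = Bᵀ := by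
    conv_rhs => rw [← hBN]
    rw [transpose_mul, transpose_mul, (isSymm_pathMatrix d).eq, Matrix.mul_assoc]
  calc (B * pathInv d * Bᵀ)ᵀ
      = B * (pathInv d)ᵀ * Bᵀ := by
        simp only [transpose_mul, transpose_transpose, Matrix.mul_assoc]
    _ = B * pathInv d * (pathMatrix d * (pathInv d)ᵀ * Bᵀ) := by
        nth_rw 1 [← hBN]
        simp only [Matrix.mul_assoc]
    _ = B * pathInv d * Bᵀ := by rw [hBNT]

lemma pathMatrix_mul_pathInv_mul_pathMatrix (hd : (pathMatrix d).det = 0) :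
    pathMatrix d * pathInv d * pathMatrix d = pathMatrix d :=
  mul_pathInv_mul_pathMatrix (by rw [pathMatrix_mulVec_pathKer, hd, neg_zero, Pi.single_zero])

end PathMatrix

section Bordered

variable {K m : Type*} [Field K] [Fintype m] {A : Matrix m m K} {f : Fin 4 → m} {d : Fin 4 → K}

lemma det_pathMatrix_eq_zero_of_rank_le_three (hA : A.submatrix f f = pathMatrix d)
    (hr : A.rank ≤ 3) : (pathMatrix d).det = 0 := by
  by_contra hdet
  have h4 : (pathMatrix d).rank = 4 := by
    rw [rank_of_isUnit _ ((isUnit_iff_isUnit_det _).2 (isUnit_iff_ne_zero.2 hdet)),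
      Fintype.card_fin]
  have hle : (pathMatrix d).rank ≤ A.rank := hA ▸ rank_submatrix_le A f f
  omega

lemma submatrix_mul_pathInv_mul_submatrix_eq (hA : A.submatrix f f = pathMatrix d)
    (hr : A.rank ≤ 3) : A.submatrix id f * pathInv d * A.submatrix f id = A := by
  refine submatrix_mul_mul_submatrix_eq_of_rank_le ?_ ?_
  · rw [hA]
    exact hr.trans (three_le_rank_pathMatrix d)
  · rw [hA]
    exact pathMatrix_mul_pathInv_mul_pathMatrix (det_pathMatrix_eq_zero_of_rank_le_three hA hr)

lemma submatrix_mulVec_pathKer_eq_zero (hA : A.submatrix f f = pathMatrix d)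
    (hr : A.rank ≤ 3) : A.submatrix id f *ᵥ pathKer d = 0 := by
  have hcol : A.submatrix id f = A.submatrix id f * pathInv d * pathMatrix d := by
    conv_lhs => rw [← submatrix_mul_pathInv_mul_submatrix_eq hA hr]
    rw [← hA]
    rfl
  rw [hcol, ← mulVec_mulVec, pathMatrix_mulVec_pathKer,
    det_pathMatrix_eq_zero_of_rank_le_three hA hr, neg_zero, Pi.single_zero, mulVec_zero]

end Bordered

section MinRank

variable {F V W : Type*} [Field F] {G : SimpleGraph V} {H : SimpleGraph W}

lemma IsGraphMatrix.submatrix {A : Matrix W W F} (hA : IsGraphMatrix F H A) (f : G ↪g H) :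
    IsGraphMatrix F G (A.submatrix f f) :=
  ⟨hA.1.submatrix f, fun _ _ hij => (hA.2 _ _ (f.injective.ne hij)).trans f.map_adj_iff⟩

lemma isGraphMatrix_adjMatrix [DecidableRel G.Adj] : IsGraphMatrix F G (G.adjMatrix F) :=
  ⟨G.isSymm_adjMatrix, fun _ _ _ => by simp [SimpleGraph.adjMatrix_apply]⟩

lemma minRank_le_rank [Fintype V] {A : Matrix V V F} (hA : IsGraphMatrix F G A) :
    minRank F G ≤ A.rank :=
  Nat.sInf_le ⟨A, hA, rfl⟩

variable (F G) in
lemma exists_isGraphMatrix_rank_eq_minRank [Fintype V] :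
    ∃ A : Matrix V V F, IsGraphMatrix F G A ∧ A.rank = minRank F G := by
  classical
  exact Nat.sInf_mem (s := {r | ∃ A : Matrix V V F, IsGraphMatrix F G A ∧ A.rank = r})
    ⟨_, G.adjMatrix F, isGraphMatrix_adjMatrix, rfl⟩

lemma minRank_le_of_embedding [Fintype V] [Fintype W] (f : G ↪g H) :
    minRank F G ≤ minRank F H := by
  obtain ⟨A, hA, hr⟩ := exists_isGraphMatrix_rank_eq_minRank F H
  exact hr ▸ (minRank_le_rank (hA.submatrix f)).trans (rank_submatrix_le A f f)

lemma isGraphMatrix_zmod_two_iff [DecidableRel G.Adj] {A : Matrix V V (ZMod 2)} :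
    IsGraphMatrix (ZMod 2) G A ↔ ∀ x y, x ≠ y → A x y = G.adjMatrix (ZMod 2) x y := by
  have hpt (t : ZMod 2) (p : Prop) [Decidable p] : (t ≠ 0 ↔ p) ↔ t = if p then 1 else 0 := by
    by_cases hp : p <;> simp only [hp] <;> revert t <;> decide
  simp only [IsGraphMatrix, hpt, SimpleGraph.adjMatrix_apply]
  refine ⟨And.right, fun h => ⟨IsSymm.ext fun x y => ?_, h⟩⟩
  obtain rfl | hxy := eq_or_ne x y
  · rfl
  · simp only [h x y hxy, h y x hxy.symm, G.adj_comm]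

instance : DecidableRel pathP4.Adj := fun i j => by
  unfold pathP4
  infer_instance

lemma eq_pathMatrix_diag_of_isGraphMatrix_pathP4 {A : Matrix (Fin 4) (Fin 4) (ZMod 2)}
    (hA : IsGraphMatrix (ZMod 2) pathP4 A) : A = pathMatrix A.diag := by
  ext i j
  obtain rfl | hij := eq_or_ne i j
  · fin_cases i <;> rfl
  · rw [isGraphMatrix_zmod_two_iff.1 hA i j hij]
    generalize A.diag = d
    revert i j d
    decide

end MinRank

section Completion

variable {R E E' : Type*} [CommRing R] (a : Matrix E E R) (b : Matrix E (Fin 4) R)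
  (d : Fin 4 → R)

/-- The generalized Schur complement of a path block with diagonal `d` bordered by the columns
`b`: it is what remains of `a` after subtracting the only block compatible with rank `3`. -/
def completionDefect : Matrix E E R := a - b * pathInv d * bᵀ

/-- The off-diagonal entries of `v` on the index set `S` vanish. -/
def IsOffDiagZeroOn (v : Matrix E E R) (S : Set E) : Prop :=
  ∀ x ∈ S, ∀ y ∈ S, x ≠ y → v x y = 0

/-- `d` is the path diagonal of a rank-`3` completion over the vertices of `S`: here `b x` lists
the entries joining `x` to the four path vertices and `a` those joining vertices off the path,
whose diagonal entries are free and therefore never inspected. -/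
def IsCompletionDiag (S : Set E) : Prop :=
  (pathMatrix d).det = 0 ∧ (∀ x ∈ S, b x ⬝ᵥ pathKer d = 0) ∧
    IsOffDiagZeroOn (completionDefect a b d) S

variable {a b d}

lemma completionDefect_apply (x y : E) :
    completionDefect a b d x y = a x y - (b x 1 * b y 0 + b x 2 * (b y 1 - d 1 * b y 0) +
      b x 3 * (b y 2 - d 2 * b y 1 + (d 1 * d 2 - 1) * b y 0)) := by
  simp [completionDefect, pathInv, Matrix.mul_apply, Fin.sum_univ_four]
  ring

lemma IsOffDiagZeroOn.mono {v : Matrix E E R} {S T : Set E} (hST : S ⊆ T)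
    (hT : IsOffDiagZeroOn v T) : IsOffDiagZeroOn v S :=
  fun x hx y hy => hT x (hST hx) y (hST hy)

lemma not_isOffDiagZeroOn_iff {v : Matrix E E R} {S : Set E} :
    ¬ IsOffDiagZeroOn v S ↔ ∃ x ∈ S, ∃ y ∈ S, x ≠ y ∧ v x y ≠ 0 := by
  simp [IsOffDiagZeroOn]

lemma IsCompletionDiag.mono {S T : Set E} (hST : S ⊆ T) (hT : IsCompletionDiag a b d T) :
    IsCompletionDiag a b d S :=
  ⟨hT.1, fun x hx => hT.2.1 x (hST hx), hT.2.2.mono hST⟩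

lemma isCompletionDiag_image_iff {φ : E' → E} (hφ : Function.Injective φ) {S : Set E'} :
    IsCompletionDiag a b d (φ '' S) ↔
      IsCompletionDiag (a.submatrix φ φ) (b.submatrix φ id) d S := by
  unfold IsCompletionDiag IsOffDiagZeroOn
  simp only [Set.forall_mem_image, hφ.ne_iff]
  rfl

lemma IsCompletionDiag.congr {f : Fin 4 → E} {a' : Matrix E E R}
    (ha : ∀ x y, x ≠ y → a x y = a' x y)
    (h : IsCompletionDiag a (a.submatrix id f) d (Set.range f)ᶜ) :
    IsCompletionDiag a' (a'.submatrix id f) d (Set.range f)ᶜ := by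
  have hb (x) (hx : x ∈ (Set.range f)ᶜ) : a.submatrix id f x = a'.submatrix id f x :=
    funext fun i => ha x (f i) fun hxi => hx ⟨i, hxi.symm⟩
  refine ⟨h.1, fun x hx => hb x hx ▸ h.2.1 x hx, fun x hx y hy hxy => ?_⟩
  rw [← h.2.2 x hx y hy hxy, completionDefect_apply, completionDefect_apply, hb x hx, hb y hy,
    ha x y hxy]

variable [Fintype E] {f : Fin 4 → E}

lemma isCompletionDiag_of_rank_le_three {K : Type*} [Field K] {A : Matrix E E K}
    {d : Fin 4 → K} (hsymm : A.IsSymm) (hA : A.submatrix f f = pathMatrix d)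
    (hr : A.rank ≤ 3) (S : Set E) : IsCompletionDiag A (A.submatrix id f) d S := by
  refine ⟨det_pathMatrix_eq_zero_of_rank_le_three hA hr,
    fun x _ => congrFun (submatrix_mulVec_pathKer_eq_zero hA hr) x, fun x _ y _ _ => ?_⟩
  have hdefect : completionDefect A (A.submatrix id f) d = 0 := by
    rw [completionDefect, transpose_submatrix, hsymm.eq,
      submatrix_mul_pathInv_mul_submatrix_eq hA hr, sub_self]
  rw [hdefect, Matrix.zero_apply]

lemma IsCompletionDiag.exists_rank_le_three [StrongRankCondition R] (hsymm : a.IsSymm)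
    (ha : a.submatrix f f = pathMatrix d)
    (h : IsCompletionDiag a (a.submatrix id f) d (Set.range f)ᶜ) :
    ∃ M : Matrix E E R, M.rank ≤ 3 ∧ ∀ x y, x ≠ y → M x y = a x y := by
  set B := a.submatrix id f
  have hker : B *ᵥ pathKer d = 0 := by
    funext x
    by_cases hx : x ∈ Set.range f
    · obtain ⟨i, rfl⟩ := hx
      have hi := congrFun (pathMatrix_mulVec_pathKer d) i
      rwa [h.1, neg_zero, Pi.single_zero, ← ha] at hi
    · exact h.2.1 x hx
  set M := B * pathInv d * Bᵀ
  have hMsymm : M.IsSymm := isSymm_mul_pathInv_mul_transpose hker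
  have hcol (x : E) (i : Fin 4) : M x (f i) = a x (f i) := by
    have hMf : M.submatrix id f = B * pathInv d * pathMatrix d := by
      rw [← (isSymm_pathMatrix d).eq, ← ha]
      rfl
    exact congrFun₂ (hMf.trans (mul_pathInv_mul_pathMatrix hker)) x i
  refine ⟨M, ?_, fun x y hxy => ?_⟩
  · exact ((rank_mul_le_left _ _).trans (rank_mul_le_right _ _)).trans (rank_pathInv_le d)
  · by_cases hy : y ∈ Set.range f
    · obtain ⟨i, rfl⟩ := hy
      exact hcol x i
    by_cases hx : x ∈ Set.range f
    · obtain ⟨i, rfl⟩ := hx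
      rw [← hMsymm.apply, hcol, hsymm.apply]
    · exact (sub_eq_zero.1 (h.2.2 x hx y hy hxy)).symm

end Completion

section Realization

variable {V : Type*} [Fintype V] {G : SimpleGraph V} [DecidableRel G.Adj] (f : pathP4 ↪g G)

lemma exists_isCompletionDiag_of_minRank_le_three (h : minRank (ZMod 2) G ≤ 3) :
    ∃ d, IsCompletionDiag (G.adjMatrix (ZMod 2)) ((G.adjMatrix (ZMod 2)).submatrix id f) d
      (Set.range f)ᶜ := by
  obtain ⟨A, hA, hr⟩ := exists_isGraphMatrix_rank_eq_minRank (ZMod 2) G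
  have hP := eq_pathMatrix_diag_of_isGraphMatrix_pathP4 (hA.submatrix f)
  exact ⟨_, (isCompletionDiag_of_rank_le_three hA.1 hP (hr.trans_le h) _).congr
    (isGraphMatrix_zmod_two_iff.1 hA)⟩

variable {f} in
lemma IsCompletionDiag.minRank_le_three {d : Fin 4 → ZMod 2}
    (h : IsCompletionDiag (G.adjMatrix (ZMod 2)) ((G.adjMatrix (ZMod 2)).submatrix id f) d
      (Set.range f)ᶜ) : minRank (ZMod 2) G ≤ 3 := by
  classical
  let A := G.adjMatrix (ZMod 2) + diagonal (Function.extend f d 0)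
  have hoff (x y) (hxy : x ≠ y) : A x y = G.adjMatrix (ZMod 2) x y := by
    simp [A, diagonal_apply_ne _ hxy]
  have hA : IsGraphMatrix (ZMod 2) G A := isGraphMatrix_zmod_two_iff.2 hoff
  have hdiag : (A.submatrix f f).diag = d := by
    ext i
    simp [A, f.injective.extend_apply]
  have hP : A.submatrix f f = pathMatrix d :=
    hdiag ▸ eq_pathMatrix_diag_of_isGraphMatrix_pathP4 (hA.submatrix f)
  obtain ⟨M, hMr, hM⟩ :=
    (h.congr fun x y hxy => (hoff x y hxy).symm).exists_rank_le_three hA.1 hP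
  exact (minRank_le_rank (isGraphMatrix_zmod_two_iff.2 fun x y hxy =>
    (hM x y hxy).trans (hoff x y hxy))).trans hMr

end Realization

section Obstruction

variable {E : Type*} {u v w : Matrix E E (ZMod 2)}

lemma exists_card_le_two_not_isOffDiagZeroOn (hv : ¬ IsOffDiagZeroOn v Set.univ) :
    ∃ S : Finset E, S.card ≤ 2 ∧ ¬ IsOffDiagZeroOn v S := by
  classical
  obtain ⟨x, -, y, -, hxy, h⟩ := not_isOffDiagZeroOn_iff.1 hv
  exact ⟨{x, y}, Finset.card_le_two,
    not_isOffDiagZeroOn_iff.2 ⟨x, by simp, y, by simp, hxy, h⟩⟩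

lemma eq_one_and_eq_one_of_add_mul_ne {s p q : ZMod 2} (h : s + p * q ≠ s) : p = 1 ∧ q = 1 := by
  decide +revert

lemma exists_card_le_three_not_isOffDiagZeroOn {e : E → ZMod 2}
    (hvw : ∀ x y, w x y = v x y + e x * e y)
    (hv : ¬ IsOffDiagZeroOn v Set.univ) (hw : ¬ IsOffDiagZeroOn w Set.univ) :
    ∃ S : Finset E, S.card ≤ 3 ∧ ¬ IsOffDiagZeroOn v S ∧ ¬ IsOffDiagZeroOn w S := by
  classical
  simp only [not_isOffDiagZeroOn_iff, Set.mem_univ, true_and, Finset.mem_coe] at hv hw ⊢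
  by_cases hcommon : ∃ x y, x ≠ y ∧ v x y ≠ 0 ∧ w x y ≠ 0
  · obtain ⟨x, y, hxy, hvxy, hwxy⟩ := hcommon
    exact ⟨{x, y}, Finset.card_le_two.trans (by norm_num),
      ⟨x, by simp, y, by simp, hxy, hvxy⟩, x, by simp, y, by simp, hxy, hwxy⟩
  push Not at hcommon
  obtain ⟨x, y, hxy, hvxy⟩ := hv
  obtain ⟨z, t, hzt, hwzt⟩ := hw
  obtain ⟨hex, -⟩ : e x = 1 ∧ e y = 1 :=
    eq_one_and_eq_one_of_add_mul_ne (by rwa [← hvw, hcommon x y hxy hvxy, ne_comm])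
  obtain ⟨hez, -⟩ : e z = 1 ∧ e t = 1 :=
    eq_one_and_eq_one_of_add_mul_ne (s := v z t) (by
      rwa [← hvw, not_imp_comm.1 (hcommon z t hzt) hwzt])
  obtain rfl | hxz := eq_or_ne x z
  · exact ⟨{x, y, t}, Finset.card_le_three, ⟨x, by simp, y, by simp, hxy, hvxy⟩,
      x, by simp, t, by simp, hzt, hwzt⟩
  by_cases hvxz : v x z = 0
  · have hwxz : w x z ≠ 0 := by simp [hvw, hvxz, hex, hez]
    exact ⟨{x, y, z}, Finset.card_le_three, ⟨x, by simp, y, by simp, hxy, hvxy⟩,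
      x, by simp, z, by simp, hxz, hwxz⟩
  · exact ⟨{x, z, t}, Finset.card_le_three, ⟨x, by simp, z, by simp, hxz, hvxz⟩,
      z, by simp, t, by simp, hzt, hwzt⟩

lemma exists_card_le_four_not_isOffDiagZeroOn_of_common
    (huv : ∃ x y, x ≠ y ∧ u x y ≠ 0 ∧ v x y ≠ 0) (hw : ¬ IsOffDiagZeroOn w Set.univ) :
    ∃ S : Finset E, S.card ≤ 4 ∧
      ¬ IsOffDiagZeroOn u S ∧ ¬ IsOffDiagZeroOn v S ∧ ¬ IsOffDiagZeroOn w S := by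
  classical
  obtain ⟨x, y, hxy, hu, hv⟩ := huv
  obtain ⟨T, hT, hwT⟩ := exists_card_le_two_not_isOffDiagZeroOn hw
  refine ⟨{x, y} ∪ T, ?_, ?_, ?_, fun h => hwT (h.mono ?_)⟩
  · exact (Finset.card_union_le _ _).trans (Nat.add_le_add Finset.card_le_two hT)
  · exact not_isOffDiagZeroOn_iff.2 ⟨x, by simp, y, by simp, hxy, hu⟩
  · exact not_isOffDiagZeroOn_iff.2 ⟨x, by simp, y, by simp, hxy, hv⟩
  · exact Finset.coe_subset.2 Finset.subset_union_right

lemma exists_eq_one_and_eq_zero {l r : E → ZMod 2} (huv : ∀ x y, v x y = u x y + l x * l y)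
    (hwv : ∀ x y, v x y = w x y + r x * r y) {x y : E} (hu : u x y ≠ 0) (hv : v x y = 0)
    (hw : w x y = 0) : ∃ q, l q = 1 ∧ r q = 0 := by
  obtain ⟨hlx, hly⟩ : l x = 1 ∧ l y = 1 :=
    eq_one_and_eq_one_of_add_mul_ne (by rwa [← huv, hv, ne_comm])
  have hr : r x * r y = 0 := by simpa only [hv, hw, zero_add, eq_comm] using hwv x y
  obtain hrx | hry := mul_eq_zero.1 hr
  · exact ⟨x, hlx, hrx⟩
  · exact ⟨y, hly, hry⟩

lemma exists_card_le_four_not_isOffDiagZeroOn {l r : E → ZMod 2}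
    (huv : ∀ x y, v x y = u x y + l x * l y) (hwv : ∀ x y, v x y = w x y + r x * r y)
    (hu : ¬ IsOffDiagZeroOn u Set.univ) (hv : ¬ IsOffDiagZeroOn v Set.univ)
    (hw : ¬ IsOffDiagZeroOn w Set.univ) :
    ∃ S : Finset E, S.card ≤ 4 ∧
      ¬ IsOffDiagZeroOn u S ∧ ¬ IsOffDiagZeroOn v S ∧ ¬ IsOffDiagZeroOn w S := by
  classical
  by_cases hcommon_uv : ∃ x y, x ≠ y ∧ u x y ≠ 0 ∧ v x y ≠ 0
  · exact exists_card_le_four_not_isOffDiagZeroOn_of_common hcommon_uv hw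
  by_cases hcommon_uw : ∃ x y, x ≠ y ∧ u x y ≠ 0 ∧ w x y ≠ 0
  · obtain ⟨S, hS, hSu, hSw, hSv⟩ :=
      exists_card_le_four_not_isOffDiagZeroOn_of_common hcommon_uw hv
    exact ⟨S, hS, hSu, hSv, hSw⟩
  by_cases hcommon_vw : ∃ x y, x ≠ y ∧ v x y ≠ 0 ∧ w x y ≠ 0
  · obtain ⟨S, hS, hSv, hSw, hSu⟩ :=
      exists_card_le_four_not_isOffDiagZeroOn_of_common hcommon_vw hu
    exact ⟨S, hS, hSu, hSv, hSw⟩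
  push Not at hcommon_uv hcommon_uw hcommon_vw
  simp only [not_isOffDiagZeroOn_iff, Set.mem_univ, true_and, Finset.mem_coe] at hu hv hw ⊢
  obtain ⟨x, y, hxy, huxy⟩ := hu
  obtain ⟨z, t, hzt, hwzt⟩ := hw
  obtain ⟨p, p', hpp', hvpp'⟩ := hv
  obtain ⟨q, hlq, hrq⟩ :=
    exists_eq_one_and_eq_zero huv hwv huxy (hcommon_uv x y hxy huxy) (hcommon_uw x y hxy huxy)
  obtain ⟨s, hrs, hls⟩ := exists_eq_one_and_eq_zero hwv huv hwzt
    (not_imp_comm.1 (hcommon_vw z t hzt) hwzt) (not_imp_comm.1 (hcommon_uw z t hzt) hwzt)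
  have hupp' : u p p' = 0 := not_imp_comm.1 (hcommon_uv p p' hpp') hvpp'
  obtain ⟨hlp, -⟩ : l p = 1 ∧ l p' = 1 :=
    eq_one_and_eq_one_of_add_mul_ne (by rwa [← huv, hupp'])
  obtain ⟨hrp, -⟩ : r p = 1 ∧ r p' = 1 :=
    eq_one_and_eq_one_of_add_mul_ne (by rwa [← hwv, hcommon_vw p p' hpp' hvpp'])
  have hpq : p ≠ q := by rintro rfl; simp [hrp] at hrq
  have hps : p ≠ s := by rintro rfl; simp [hlp] at hls
  have hupq : u p q ≠ 0 := by
    intro h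
    have hv : v p q ≠ 0 := by simp [huv, h, hlp, hlq]
    exact hv (by simp [hwv, hcommon_vw p q hpq hv, hrq])
  have hwps : w p s ≠ 0 := by
    intro h
    have hv : v p s ≠ 0 := by simp [hwv, h, hrp, hrs]
    exact hv (by simp [huv, not_imp_comm.1 (hcommon_uv p s hps) hv, hls])
  exact ⟨{p, p', q, s}, Finset.card_le_four, ⟨p, by simp, q, by simp, hpq, hupq⟩,
    ⟨p, by simp, p', by simp, hpp', hvpp'⟩, p, by simp, s, by simp, hps, hwps⟩

end Obstruction

section PathDiagonals

lemma det_pathMatrix_eq_zero_iff {d : Fin 4 → ZMod 2} : (pathMatrix d).det = 0 ↔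
    d = ![0, 0, 1, 1] ∨ d = ![0, 1, 1, 1] ∨ d = ![1, 0, 0, 1] ∨ d = ![1, 1, 0, 0] ∨
      d = ![1, 1, 1, 0] := by
  rw [det_pathMatrix]
  decide +revert

variable {E : Type*} {a : Matrix E E (ZMod 2)} {b : Matrix E (Fin 4) (ZMod 2)} {x y : E}

lemma completionDefect_0111 (hx : b x 0 + b x 2 + b x 3 = 0) :
    completionDefect a b ![0, 1, 1, 1] x y =
      completionDefect a b ![0, 0, 1, 1] x y + b x 0 * b y 0 := by
  simp only [completionDefect_apply, Matrix.cons_val]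
  have h2 : (2 : ZMod 2) = 0 := rfl
  linear_combination -b y 0 * hx + b x 2 * b y 0 * h2

lemma completionDefect_1110 (hy : b y 0 + b y 1 + b y 3 = 0) :
    completionDefect a b ![1, 1, 1, 0] x y =
      completionDefect a b ![1, 1, 0, 0] x y + b x 3 * b y 3 := by
  simp only [completionDefect_apply, Matrix.cons_val]
  have h2 : (2 : ZMod 2) = 0 := rfl
  linear_combination -b x 3 * hy + b x 3 * b y 1 * h2

lemma completionDefect_0111_eq_1110 :
    completionDefect a b ![0, 1, 1, 1] = completionDefect a b ![1, 1, 1, 0] := rfl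

lemma completionDefect_1001_eq_0011 (hy : b y 0 + b y 2 + b y 3 = 0)
    (hy' : b y 0 + b y 1 + b y 2 + b y 3 = 0) :
    completionDefect a b ![1, 0, 0, 1] x y = completionDefect a b ![0, 0, 1, 1] x y := by
  simp only [completionDefect_apply, Matrix.cons_val]
  linear_combination b x 3 * (hy - hy')

lemma completionDefect_1001_eq_1100 (hx : b x 0 + b x 1 + b x 3 = 0)
    (hx' : b x 0 + b x 1 + b x 2 + b x 3 = 0) :
    completionDefect a b ![1, 0, 0, 1] x y = completionDefect a b ![1, 1, 0, 0] x y := by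
  simp only [completionDefect_apply, Matrix.cons_val]
  linear_combination b y 0 * (hx - hx')

variable {S : Set E}

lemma isCompletionDiag_0011_iff : IsCompletionDiag a b ![0, 0, 1, 1] S ↔
    (∀ x ∈ S, b x 0 + b x 2 + b x 3 = 0) ∧
      IsOffDiagZeroOn (completionDefect a b ![0, 0, 1, 1]) S := by
  simp [IsCompletionDiag, det_pathMatrix, pathKer, dotProduct, Fin.sum_univ_four,
    CharTwo.add_self_eq_zero]

lemma isCompletionDiag_0111_iff : IsCompletionDiag a b ![0, 1, 1, 1] S ↔
    (∀ x ∈ S, b x 0 + b x 2 + b x 3 = 0) ∧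
      IsOffDiagZeroOn (completionDefect a b ![0, 1, 1, 1]) S := by
  simp [IsCompletionDiag, det_pathMatrix, pathKer, dotProduct, Fin.sum_univ_four,
    CharTwo.add_self_eq_zero]

lemma isCompletionDiag_1001_iff : IsCompletionDiag a b ![1, 0, 0, 1] S ↔
    (∀ x ∈ S, b x 0 + b x 1 + b x 2 + b x 3 = 0) ∧
      IsOffDiagZeroOn (completionDefect a b ![1, 0, 0, 1]) S := by
  simp [IsCompletionDiag, det_pathMatrix, pathKer, dotProduct, Fin.sum_univ_four,
    CharTwo.add_self_eq_zero]

lemma isCompletionDiag_1100_iff : IsCompletionDiag a b ![1, 1, 0, 0] S ↔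
    (∀ x ∈ S, b x 0 + b x 1 + b x 3 = 0) ∧
      IsOffDiagZeroOn (completionDefect a b ![1, 1, 0, 0]) S := by
  simp [IsCompletionDiag, det_pathMatrix, pathKer, dotProduct, Fin.sum_univ_four,
    CharTwo.add_self_eq_zero]

lemma isCompletionDiag_1110_iff : IsCompletionDiag a b ![1, 1, 1, 0] S ↔
    (∀ x ∈ S, b x 0 + b x 1 + b x 3 = 0) ∧
      IsOffDiagZeroOn (completionDefect a b ![1, 1, 1, 0]) S := by
  simp [IsCompletionDiag, det_pathMatrix, pathKer, dotProduct, Fin.sum_univ_four,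
    CharTwo.add_self_eq_zero]

lemma forall_not_isCompletionDiag (h0011 : ¬ IsCompletionDiag a b ![0, 0, 1, 1] S)
    (h0111 : ¬ IsCompletionDiag a b ![0, 1, 1, 1] S)
    (h1001 : ¬ IsCompletionDiag a b ![1, 0, 0, 1] S)
    (h1100 : ¬ IsCompletionDiag a b ![1, 1, 0, 0] S)
    (h1110 : ¬ IsCompletionDiag a b ![1, 1, 1, 0] S) (d : Fin 4 → ZMod 2) :
    ¬ IsCompletionDiag a b d S := by
  intro h
  obtain rfl | rfl | rfl | rfl | rfl := det_pathMatrix_eq_zero_iff.1 h.1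
  exacts [h0011 h, h0111 h, h1001 h, h1100 h, h1110 h]

lemma IsCompletionDiag.to_0011_of_1001 (hS : ∀ x ∈ S, b x 0 + b x 2 + b x 3 = 0)
    (h : IsCompletionDiag a b ![1, 0, 0, 1] S) : IsCompletionDiag a b ![0, 0, 1, 1] S := by
  rw [isCompletionDiag_1001_iff] at h
  refine isCompletionDiag_0011_iff.2 ⟨hS, fun x hx y hy hxy => ?_⟩
  rw [← completionDefect_1001_eq_0011 (hS y hy) (h.1 y hy), h.2 x hx y hy hxy]

lemma IsCompletionDiag.to_1100_of_1001 (hS : ∀ x ∈ S, b x 0 + b x 1 + b x 3 = 0)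
    (h : IsCompletionDiag a b ![1, 0, 0, 1] S) : IsCompletionDiag a b ![1, 1, 0, 0] S := by
  rw [isCompletionDiag_1001_iff] at h
  refine isCompletionDiag_1100_iff.2 ⟨hS, fun x hx y hy hxy => ?_⟩
  rw [← completionDefect_1001_eq_1100 (hS x hx) (h.1 x hx), h.2 x hx y hy hxy]

lemma exists_card_le_two_not_isCompletionDiag_1001
    (h : ¬ IsCompletionDiag a b ![1, 0, 0, 1] Set.univ) :
    ∃ S : Finset E, S.card ≤ 2 ∧ ¬ IsCompletionDiag a b ![1, 0, 0, 1] S := by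
  by_cases hker : ∀ x ∈ Set.univ, b x 0 + b x 1 + b x 2 + b x 3 = 0
  · obtain ⟨S, hS, hdefect⟩ :=
      exists_card_le_two_not_isOffDiagZeroOn fun h' =>
        h (isCompletionDiag_1001_iff.2 ⟨hker, h'⟩)
    exact ⟨S, hS, fun h' => hdefect (isCompletionDiag_1001_iff.1 h').2⟩
  · push Not at hker
    obtain ⟨x, -, hx⟩ := hker
    exact ⟨{x}, by simp, fun h' => hx ((isCompletionDiag_1001_iff.1 h').1 x (by simp))⟩

lemma exists_card_le_four_forall_not_isCompletionDiag_of_forall_of_forall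
    (h : ∀ d, ¬ IsCompletionDiag a b d Set.univ)
    (hα : ∀ x, b x 0 + b x 2 + b x 3 = 0) (hγ : ∀ x, b x 0 + b x 1 + b x 3 = 0) :
    ∃ S : Finset E, S.card ≤ 4 ∧ ∀ d, ¬ IsCompletionDiag a b d S := by
  obtain ⟨S, hS, h0011, h0111, h1100⟩ := exists_card_le_four_not_isOffDiagZeroOn
    (fun x y => completionDefect_0111 (y := y) (hα x))
    (fun x y => completionDefect_1110 (x := x) (hγ y))
    (fun h' => h _ (isCompletionDiag_0011_iff.2 ⟨fun x _ => hα x, h'⟩))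
    (fun h' => h _ (isCompletionDiag_0111_iff.2 ⟨fun x _ => hα x, h'⟩))
    (fun h' => h _ (isCompletionDiag_1100_iff.2 ⟨fun x _ => hγ x, h'⟩))
  exact ⟨S, hS, forall_not_isCompletionDiag (fun h' => h0011 h'.2.2) (fun h' => h0111 h'.2.2)
    (fun h' => h0011 (h'.to_0011_of_1001 fun x _ => hα x).2.2) (fun h' => h1100 h'.2.2)
    (fun h' => h0111 h'.2.2)⟩

lemma exists_card_le_four_forall_not_isCompletionDiag_of_forall_of_ne
    (h : ∀ d, ¬ IsCompletionDiag a b d Set.univ)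
    (hα : ∀ x, b x 0 + b x 2 + b x 3 = 0) {z : E} (hz : b z 0 + b z 1 + b z 3 ≠ 0) :
    ∃ S : Finset E, S.card ≤ 4 ∧ ∀ d, ¬ IsCompletionDiag a b d S := by
  classical
  obtain ⟨T, hT, h0011, h0111⟩ := exists_card_le_three_not_isOffDiagZeroOn
    (fun x y => completionDefect_0111 (y := y) (hα x))
    (fun h' => h _ (isCompletionDiag_0011_iff.2 ⟨fun x _ => hα x, h'⟩))
    (fun h' => h _ (isCompletionDiag_0111_iff.2 ⟨fun x _ => hα x, h'⟩))
  have hTS : (T : Set E) ⊆ ↑(insert z T) := Finset.coe_subset.2 (Finset.subset_insert z T)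
  exact ⟨insert z T, (Finset.card_insert_le z T).trans (Nat.succ_le_succ hT),
    forall_not_isCompletionDiag (fun h' => h0011 (h'.mono hTS).2.2)
      (fun h' => h0111 (h'.mono hTS).2.2)
      (fun h' => h0011 ((h'.mono hTS).to_0011_of_1001 fun x _ => hα x).2.2)
      (fun h' => hz ((isCompletionDiag_1100_iff.1 h').1 z (by simp)))
      (fun h' => hz ((isCompletionDiag_1110_iff.1 h').1 z (by simp)))⟩

lemma exists_card_le_four_forall_not_isCompletionDiag_of_ne_of_forall
    (h : ∀ d, ¬ IsCompletionDiag a b d Set.univ)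
    {x : E} (hx : b x 0 + b x 2 + b x 3 ≠ 0) (hγ : ∀ x, b x 0 + b x 1 + b x 3 = 0) :
    ∃ S : Finset E, S.card ≤ 4 ∧ ∀ d, ¬ IsCompletionDiag a b d S := by
  classical
  obtain ⟨T, hT, h1100, h1110⟩ := exists_card_le_three_not_isOffDiagZeroOn
    (fun x y => completionDefect_1110 (x := x) (hγ y))
    (fun h' => h _ (isCompletionDiag_1100_iff.2 ⟨fun x _ => hγ x, h'⟩))
    (fun h' => h _ (isCompletionDiag_1110_iff.2 ⟨fun x _ => hγ x, h'⟩))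
  have hTS : (T : Set E) ⊆ ↑(insert x T) := Finset.coe_subset.2 (Finset.subset_insert x T)
  exact ⟨insert x T, (Finset.card_insert_le x T).trans (Nat.succ_le_succ hT),
    forall_not_isCompletionDiag (fun h' => hx ((isCompletionDiag_0011_iff.1 h').1 x (by simp)))
      (fun h' => hx ((isCompletionDiag_0111_iff.1 h').1 x (by simp)))
      (fun h' => h1100 ((h'.mono hTS).to_1100_of_1001 fun x _ => hγ x).2.2)
      (fun h' => h1100 (h'.mono hTS).2.2)
      (fun h' => h1110 (h'.mono hTS).2.2)⟩

lemma exists_card_le_four_forall_not_isCompletionDiag_of_ne_of_ne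
    (h : ∀ d, ¬ IsCompletionDiag a b d Set.univ)
    {x z : E} (hx : b x 0 + b x 2 + b x 3 ≠ 0) (hz : b z 0 + b z 1 + b z 3 ≠ 0) :
    ∃ S : Finset E, S.card ≤ 4 ∧ ∀ d, ¬ IsCompletionDiag a b d S := by
  classical
  obtain ⟨T, hT, h1001⟩ := exists_card_le_two_not_isCompletionDiag_1001 (h _)
  exact ⟨{x, z} ∪ T,
    (Finset.card_union_le _ _).trans (Nat.add_le_add Finset.card_le_two hT),
    forall_not_isCompletionDiag (fun h' => hx ((isCompletionDiag_0011_iff.1 h').1 x (by simp)))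
      (fun h' => hx ((isCompletionDiag_0111_iff.1 h').1 x (by simp)))
      (fun h' => h1001 (h'.mono (Finset.coe_subset.2 Finset.subset_union_right)))
      (fun h' => hz ((isCompletionDiag_1100_iff.1 h').1 z (by simp)))
      (fun h' => hz ((isCompletionDiag_1110_iff.1 h').1 z (by simp)))⟩

theorem exists_card_le_four_forall_not_isCompletionDiag
    (h : ∀ d, ¬ IsCompletionDiag a b d Set.univ) :
    ∃ S : Finset E, S.card ≤ 4 ∧ ∀ d, ¬ IsCompletionDiag a b d S := by
  by_cases hα : ∀ x, b x 0 + b x 2 + b x 3 = 0 <;>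
    by_cases hγ : ∀ x, b x 0 + b x 1 + b x 3 = 0
  · exact exists_card_le_four_forall_not_isCompletionDiag_of_forall_of_forall h hα hγ
  · obtain ⟨z, hz⟩ := not_forall.1 hγ
    exact exists_card_le_four_forall_not_isCompletionDiag_of_forall_of_ne h hα hz
  · obtain ⟨x, hx⟩ := not_forall.1 hα
    exact exists_card_le_four_forall_not_isCompletionDiag_of_ne_of_forall h hx hγ
  · obtain ⟨x, hx⟩ := not_forall.1 hα
    obtain ⟨z, hz⟩ := not_forall.1 hγ
    exact exists_card_le_four_forall_not_isCompletionDiag_of_ne_of_ne h hx hz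

theorem exists_subset_card_le_four_forall_not_isCompletionDiag
    (h : ∀ d, ¬ IsCompletionDiag a b d S) :
    ∃ T : Finset E, ↑T ⊆ S ∧ T.card ≤ 4 ∧ ∀ d, ¬ IsCompletionDiag a b d T := by
  obtain ⟨T, hT, hTd⟩ := exists_card_le_four_forall_not_isCompletionDiag
    (a := a.submatrix ((↑) : S → E) (↑)) (b := b.submatrix ((↑) : S → E) id) fun d hd => by
      rw [← isCompletionDiag_image_iff Subtype.val_injective, Set.image_univ,
        Subtype.range_coe] at hd
      exact h d hd
  refine ⟨T.map (.subtype _), by simp, by rwa [Finset.card_map], fun d hd => hTd d ?_⟩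
  rwa [Finset.coe_map, Function.Embedding.coe_subtype,
    isCompletionDiag_image_iff Subtype.val_injective] at hd

end PathDiagonals

section Main

variable {V : Type*} {G : SimpleGraph V} (f : pathP4 ↪g G)

lemma exists_isCompletionDiag_of_minRank_induce_le_three [DecidableRel G.Adj] {T : Set V}
    [Fintype T] (hf : Set.range f ⊆ T) (h : minRank (ZMod 2) (G.induce T) ≤ 3) :
    ∃ d, IsCompletionDiag (G.adjMatrix (ZMod 2)) ((G.adjMatrix (ZMod 2)).submatrix id f) d
      (T \ Set.range f) := by
  let f' : pathP4 ↪g G.induce T :=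
    ⟨f.toEmbedding.codRestrict T fun i => hf ⟨i, rfl⟩, f.map_adj_iff⟩
  obtain ⟨d, hd⟩ := exists_isCompletionDiag_of_minRank_le_three f' h
  refine ⟨d, ((isCompletionDiag_image_iff (a := G.adjMatrix (ZMod 2))
    (b := (G.adjMatrix (ZMod 2)).submatrix id f) Subtype.val_injective).2 hd).mono ?_⟩
  rintro x ⟨hxT, hxf⟩
  refine ⟨⟨x, hxT⟩, ?_, rfl⟩
  rintro ⟨i, hi⟩
  exact hxf ⟨i, congrArg Subtype.val hi⟩

theorem exists_card_le_eight_four_le_minRank_induce [Fintype V] (h : 4 ≤ minRank (ZMod 2) G) :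
    ∃ T : Finset V, Set.range f ⊆ T ∧ T.card ≤ 8 ∧
      4 ≤ minRank (ZMod 2) (G.induce (T : Set V)) := by
  classical
  obtain ⟨S, hSf, hS, hSd⟩ := exists_subset_card_le_four_forall_not_isCompletionDiag
    fun d (hd : IsCompletionDiag _ ((G.adjMatrix (ZMod 2)).submatrix id f) d _) =>
      h.not_gt (Nat.lt_succ_of_le hd.minRank_le_three)
  have hf : Set.range f ⊆ ↑(Finset.univ.image f ∪ S) := by simp
  refine ⟨Finset.univ.image f ∪ S, hf, ?_, ?_⟩
  · exact (Finset.card_union_le _ _).trans (Nat.add_le_add Finset.card_image_le hS)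
  · by_contra! hlt
    obtain ⟨d, hd⟩ :=
      exists_isCompletionDiag_of_minRank_induce_le_three f hf (Nat.le_of_lt_succ hlt)
    refine hSd d (hd.mono fun x hx => ?_)
    exact ⟨Finset.mem_union_right _ hx, hSf hx⟩

end Main

/-- If `G ∈ F₄(F₂, P₄)`, then `G` has at most 8 vertices. -/
theorem card_le_eight_of_forbRel_P4 {V : Type*} [Fintype V] [DecidableEq V]
    (G : SimpleGraph V) (h : MemForbRel (ZMod 2) 4 pathP4 G) :
    Fintype.card V ≤ 8 := by
  obtain ⟨hG, f, hdel⟩ := h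
  obtain ⟨T, hfT, hT, hTG⟩ := exists_card_le_eight_four_le_minRank_induce f hG
  by_contra! hcard
  obtain ⟨v, hv⟩ : ∃ v, v ∉ T := by
    by_contra! hall
    rw [Finset.eq_univ_iff_forall.2 hall, Finset.card_univ] at hT
    omega
  let φ : G.induce (T : Set V) ↪g deleteVert G v :=
    ⟨Subtype.impEmbedding _ _ fun x hx => ne_of_mem_of_not_mem hx hv, Iff.rfl⟩
  have hle := minRank_le_of_embedding (F := ZMod 2) φ
  have := hdel v fun hvf => hv (hfT hvf)
  omega
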